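/- For every density operator ρ on a finite-dimensional six-partite Hilbert space H^A⊗H^B⊗H^C⊗H^D⊗H^E⊗H^F, one has I'(AB:CD:EF) ≥ I'(AB:C:E), i.e., S(ABCD) + S(ABEF) + S(CDEF) − 2S(ABCDEF) ≥ S(ABC) + S(ABE) + S(CE) − 2S(ABCE). -/

import Mathlib

open scoped BigOperators ComplexOrder
open Matrix

noncomputable section

/-- The function `x ↦ -x·log₂ x` (with the convention `0·log₂ 0 = 0`). -/
def negxlog2 (x : ℝ) : ℝ := -(x * Real.logb 2 x)

/-- The von Neumann entropy (base 2), `S(ρ) = -Tr(ρ log₂ ρ)`, computed as the sum of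
`-λ log₂ λ` over the eigenvalues of a Hermitian matrix (junk value `0` otherwise). -/
def vnEntropy {n : Type} [Fintype n] [DecidableEq n] (ρ : Matrix n n ℂ) : ℝ :=
  if h : ρ.IsHermitian then ∑ i, negxlog2 (h.eigenvalues i) else 0

/-- The Tsallis q-entropy `S_q(ρ) = (1 - Tr ρ^q)/(q-1)`, computed via eigenvalues. -/
def tsallisEntropy (q : ℝ) {n : Type} [Fintype n] [DecidableEq n] (ρ : Matrix n n ℂ) : ℝ :=
  if h : ρ.IsHermitian then (1 - ∑ i, (h.eigenvalues i) ^ q) / (q - 1) else 0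

/-- A density operator: positive semidefinite with unit trace. -/
def IsDensity {n : Type} [Fintype n] [DecidableEq n] (ρ : Matrix n n ℂ) : Prop :=
  ρ.PosSemidef ∧ ρ.trace = 1

/-- rank-one projection `|ψ⟩⟨ψ|`. -/
def outer {α : Type} (ψ : α → ℂ) : Matrix α α ℂ :=
  fun a b => ψ a * (starRingEnd ℂ) (ψ b)

section multi

variable {ι : Type} [Fintype ι] [DecidableEq ι] {d : ι → Type}
  [∀ i, Fintype (d i)] [∀ i, DecidableEq (d i)]

/-- Combine an assignment of basis indices on the parties in `s` with one on the
complementary parties. -/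
def combine (s : Finset ι) (x : (i : {j // j ∈ s}) → d i.1) (z : (i : {j // j ∉ s}) → d i.1)
    (i : ι) : d i :=
  if h : i ∈ s then x ⟨i, h⟩ else z ⟨i, h⟩

/-- The reduced state on the parties in `s`: partial trace over the complementary parties. -/
def pTr (ρ : Matrix (∀ i, d i) (∀ i, d i) ℂ) (s : Finset ι) :
    Matrix ((i : {j // j ∈ s}) → d i.1) ((i : {j // j ∈ s}) → d i.1) ℂ :=
  fun x y => ∑ z : (i : {j // j ∉ s}) → d i.1, ρ (combine s x z) (combine s y z)

/-- von Neumann entropy of the reduced state on `s`. -/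
def Sv (ρ : Matrix (∀ i, d i) (∀ i, d i) ℂ) (s : Finset ι) : ℝ := vnEntropy (pTr ρ s)

/-- Tsallis q-entropy of the reduced state on `s`. -/
def Sq (q : ℝ) (ρ : Matrix (∀ i, d i) (∀ i, d i) ℂ) (s : Finset ι) : ℝ :=
  tsallisEntropy q (pTr ρ s)

/-- Multipartite quantum mutual information `I(X₁:⋯:X_k) = Σ_s S(X_s) - S(X₁⋯X_k)` of a
partition `P` (each block a finset of parties, treated as a single party). -/
def MI (ρ : Matrix (∀ i, d i) (∀ i, d i) ℂ) (P : Finset (Finset ι)) : ℝ :=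
  (∑ X ∈ P, Sv ρ X) - Sv ρ (P.sup id)

/-- Dual multipartite quantum mutual information
`I'(X₁:⋯:X_k) = Σ_s S(X̄_s) - (k-1) S(X₁⋯X_k)`, where `X̄_s` is the union of all blocks
other than `X_s`. -/
def MI' (ρ : Matrix (∀ i, d i) (∀ i, d i) ℂ) (P : Finset (Finset ι)) : ℝ :=
  (∑ X ∈ P, Sv ρ (P.sup id \ X)) - ((P.card : ℝ) - 1) * Sv ρ (P.sup id)

/-- Tsallis multipartite quantum mutual information. -/
def MIq (q : ℝ) (ρ : Matrix (∀ i, d i) (∀ i, d i) ℂ) (P : Finset (Finset ι)) : ℝ :=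
  (∑ X ∈ P, Sq q ρ X) - Sq q ρ (P.sup id)

/-- Tsallis dual multipartite quantum mutual information. -/
def MIq' (q : ℝ) (ρ : Matrix (∀ i, d i) (∀ i, d i) ℂ) (P : Finset (Finset ι)) : ℝ :=
  (∑ X ∈ P, Sq q ρ (P.sup id \ X)) - ((P.card : ℝ) - 1) * Sq q ρ (P.sup id)

/-- The finest partition of the set `s` of parties: each party its own block. -/
def finest (s : Finset ι) : Finset (Finset ι) := s.image fun i => {i}

end multi

/-- A partition (of a subsystem): nonempty pairwise disjoint blocks. -/
def IsPartition {ι : Type} [DecidableEq ι] (P : Finset (Finset ι)) : Prop :=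
  (∀ X ∈ P, X.Nonempty) ∧ (P : Set (Finset ι)).PairwiseDisjoint id

/-- One coarsening step: (a) discarding whole blocks, (b) merging blocks into one block,
(c) discarding some parties from within a block containing at least two parties. -/
inductive CoarserStep {ι : Type} [DecidableEq ι] : Finset (Finset ι) → Finset (Finset ι) → Prop
  | discard {P Q : Finset (Finset ι)} (hQP : Q ⊆ P) (hQ : Q.Nonempty) : CoarserStep P Q
  | merge (P T : Finset (Finset ι)) (hT : T ⊆ P) (hT' : T.Nonempty) :
      CoarserStep P (insert (T.sup id) (P \ T))
  | shrink (P : Finset (Finset ι)) (X X' : Finset ι) (hX : X ∈ P) (h2 : 2 ≤ X.card)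
      (hsub : X' ⊆ X) (hne : X'.Nonempty) : CoarserStep P (insert X' (P.erase X))

/-- `Coarser P Q` : the partition `Q` is coarser than `P` (`P ≻ Q`). -/
def Coarser {ι : Type} [DecidableEq ι] (P Q : Finset (Finset ι)) : Prop :=
  Relation.ReflTransGen CoarserStep P Q

end


structure Spec {n i : Type} [Fintype n] [DecidableEq n] [Fintype i] [DecidableEq i]
    (M : Matrix n n ℂ) (U : Matrix n i ℂ) (p : i → ℝ) : Prop where
  l : Uᴴ * U = 1
  r : U * Uᴴ = 1
  eq : M = U * diagonal (fun k => (p k : ℂ)) * Uᴴ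
  nn : ∀ k, 0 ≤ p k

section core
variable {n i j : Type} [Fintype n] [DecidableEq n] [Fintype i] [DecidableEq i]
  [Fintype j] [DecidableEq j]

/-- the variational functional -/
noncomputable def vf (ρ σ : Matrix n n ℂ) (t : ℝ) (X : Matrix n n ℂ) : ℝ :=
  2 * (trace (ρ * X)).re - (trace (σ * (Xᴴ * X))).re - t * (trace (ρ * (X * Xᴴ))).re

noncomputable def wt (U : Matrix n i ℂ) (V : Matrix n j ℂ) (a : i) (b : j) : ℝ :=
  Complex.normSq ((Uᴴ * V) a b)

lemma vf_eq {ρ σ : Matrix n n ℂ} {U : Matrix n i ℂ} {V : Matrix n j ℂ} {p : i → ℝ} {q : j → ℝ}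
    (hρ : Spec ρ U p) (hσ : Spec σ V q) (t : ℝ) (X : Matrix n n ℂ) :
    vf ρ σ t X = ∑ a, ∑ b, (2 * p a * ((Uᴴ * X * V) a b * star ((Uᴴ * V) a b)).re
      - (q b + t * p a) * Complex.normSq ((Uᴴ * X * V) a b)) := by
  have h1 : trace (ρ * X) = ∑ a, ∑ b, (p a : ℂ) * ((Uᴴ * X * V) a b * star ((Uᴴ * V) a b)) := by
    have : trace (ρ * X) = trace (diagonal (fun k => (p k : ℂ)) * ((Uᴴ * X * V) * (Uᴴ * V)ᴴ)) := by
      rw [hρ.eq, conjTranspose_mul, conjTranspose_conjTranspose]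
      calc _ = trace (U * (diagonal (fun k => (p k : ℂ)) * Uᴴ * X)) := by simp only [Matrix.mul_assoc]
        _ = trace (diagonal (fun k => (p k : ℂ)) * Uᴴ * X * U) := by rw [trace_mul_comm]
        _ = trace (diagonal (fun k => (p k : ℂ)) * Uᴴ * X * (V * Vᴴ) * U) := by
            rw [hσ.r, Matrix.mul_one]
        _ = _ := by simp only [Matrix.mul_assoc]
    rw [this, trace]
    simp only [diag_apply, diagonal_mul, Matrix.mul_apply (M := Uᴴ * X * V), Finset.mul_sum,
      conjTranspose_apply (Uᴴ * V)]
  have h2 : trace (σ * (Xᴴ * X)) = ∑ a, ∑ b, ((q b * Complex.normSq ((Uᴴ * X * V) a b) : ℝ) : ℂ) := by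
    have : trace (σ * (Xᴴ * X)) = trace (diagonal (fun k => (q k : ℂ)) * ((Uᴴ * X * V)ᴴ * (Uᴴ * X * V))) := by
      rw [hσ.eq]
      simp only [conjTranspose_mul, conjTranspose_conjTranspose]
      calc _ = trace (V * (diagonal (fun k => (q k : ℂ)) * Vᴴ * Xᴴ * X)) := by simp only [Matrix.mul_assoc]
        _ = trace (diagonal (fun k => (q k : ℂ)) * Vᴴ * Xᴴ * X * V) := by rw [trace_mul_comm]
        _ = trace (diagonal (fun k => (q k : ℂ)) * Vᴴ * Xᴴ * (U * Uᴴ) * X * V) := by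
            rw [hρ.r, Matrix.mul_one]
        _ = _ := by simp only [Matrix.mul_assoc]
    rw [this, trace, Finset.sum_comm]
    simp only [diag_apply, diagonal_mul, Matrix.mul_apply (M := (Uᴴ * X * V)ᴴ), Finset.mul_sum,
      conjTranspose_apply (Uᴴ * X * V), Complex.ofReal_mul, Complex.normSq_eq_conj_mul_self,
      Complex.star_def]
  have h3 : trace (ρ * (X * Xᴴ)) = ∑ a, ∑ b, ((p a * Complex.normSq ((Uᴴ * X * V) a b) : ℝ) : ℂ) := by
    have : trace (ρ * (X * Xᴴ)) = trace (diagonal (fun k => (p k : ℂ)) * ((Uᴴ * X * V) * (Uᴴ * X * V)ᴴ)) := by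
      rw [hρ.eq]
      simp only [conjTranspose_mul, conjTranspose_conjTranspose]
      calc _ = trace (U * (diagonal (fun k => (p k : ℂ)) * Uᴴ * X * Xᴴ)) := by simp only [Matrix.mul_assoc]
        _ = trace (diagonal (fun k => (p k : ℂ)) * Uᴴ * X * Xᴴ * U) := by rw [trace_mul_comm]
        _ = trace (diagonal (fun k => (p k : ℂ)) * Uᴴ * X * (V * Vᴴ) * Xᴴ * U) := by
            rw [hσ.r, Matrix.mul_one]
        _ = _ := by simp only [Matrix.mul_assoc]
    rw [this, trace]
    simp only [diag_apply, diagonal_mul, Matrix.mul_apply (M := (Uᴴ * X * V)), Finset.mul_sum,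
      conjTranspose_apply (Uᴴ * X * V), Complex.ofReal_mul, Complex.normSq_eq_conj_mul_self,
      Complex.star_def]
    refine Finset.sum_congr rfl fun a _ => Finset.sum_congr rfl fun b _ => ?_
    ring
  rw [vf, h1, h2, h3]
  simp only [Complex.re_sum, Complex.ofReal_re, Complex.re_ofReal_mul, Finset.mul_sum,
    ← Finset.sum_sub_distrib]
  refine Finset.sum_congr rfl fun a _ => Finset.sum_congr rfl fun b _ => ?_
  ring

noncomputable def Ft (U : Matrix n i ℂ) (V : Matrix n j ℂ) (p : i → ℝ) (q : j → ℝ) (t : ℝ) : ℝ :=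
  ∑ a, ∑ b, wt U V a b * (p a ^ 2 / (q b + t * p a))

lemma pt_ineq (p q t : ℝ) (hp : 0 ≤ p) (hq : 0 ≤ q) (ht : 0 < t) (y k : ℂ) :
    2 * p * (y * star k).re - (q + t * p) * Complex.normSq y
      ≤ Complex.normSq k * (p ^ 2 / (q + t * p)) := by
  rcases hp.eq_or_lt with h | h
  · subst h
    have := mul_nonneg hq (Complex.normSq_nonneg y)
    simp; linarith
  · have hc : 0 < q + t * p := by positivity
    rw [← mul_div_assoc, le_div_iff₀ hc]
    simp only [Complex.normSq_apply, Complex.mul_re, Complex.star_def, Complex.conj_re,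
      Complex.conj_im]
    nlinarith [sq_nonneg ((q + t * p) * y.re - p * k.re), sq_nonneg ((q + t * p) * y.im - p * k.im)]

lemma vf_le {ρ σ : Matrix n n ℂ} {U : Matrix n i ℂ} {V : Matrix n j ℂ} {p : i → ℝ} {q : j → ℝ}
    (hρ : Spec ρ U p) (hσ : Spec σ V q) {t : ℝ} (ht : 0 < t) (X : Matrix n n ℂ) :
    vf ρ σ t X ≤ Ft U V p q t := by
  rw [vf_eq hρ hσ]
  exact Finset.sum_le_sum fun a _ => Finset.sum_le_sum fun b _ =>
    pt_ineq _ _ _ (hρ.nn a) (hσ.nn b) ht _ _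

lemma exists_vf {ρ σ : Matrix n n ℂ} {U : Matrix n i ℂ} {V : Matrix n j ℂ} {p : i → ℝ} {q : j → ℝ}
    (hρ : Spec ρ U p) (hσ : Spec σ V q) {t : ℝ} (ht : 0 < t) :
    ∃ X, Ft U V p q t = vf ρ σ t X := by
  let Y : Matrix i j ℂ := fun a b => ((p a / (q b + t * p a) : ℝ) : ℂ) * (Uᴴ * V) a b
  refine ⟨U * Y * Vᴴ, ?_⟩
  rw [vf_eq hρ hσ]
  have : Uᴴ * (U * Y * Vᴴ) * V = Y := by
    calc _ = (Uᴴ * U) * Y * (Vᴴ * V) := by simp only [Matrix.mul_assoc]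
      _ = Y := by rw [hρ.l, hσ.l]; simp
  rw [this]
  refine Finset.sum_congr rfl fun a _ => Finset.sum_congr rfl fun b _ => ?_
  rw [wt]
  simp only [Y, Complex.normSq_mul, Complex.normSq_ofReal, mul_assoc, Complex.re_ofReal_mul,
    Complex.star_def, Complex.mul_conj, Complex.ofReal_re]
  rcases (hρ.nn a).eq_or_lt with h | h
  · simp [← h]
  · have hc : 0 < q b + t * p a := by have := hσ.nn b; positivity
    field_simp
    ring

lemma wt_sum {σ ρ : Matrix n n ℂ} {U : Matrix n i ℂ} {V : Matrix n j ℂ} {p : i → ℝ} {q : j → ℝ}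
    (hρ : Spec ρ U p) (hσ : Spec σ V q) (a : i) : ∑ b, wt U V a b = 1 := by
  have h : (Uᴴ * V) * (Uᴴ * V)ᴴ = 1 := by
    rw [conjTranspose_mul, conjTranspose_conjTranspose]
    calc _ = Uᴴ * (V * Vᴴ) * U := by simp only [Matrix.mul_assoc]
      _ = 1 := by rw [hσ.r, Matrix.mul_one, hρ.l]
  have h2 := congrFun (congrFun h a) a
  rw [Matrix.mul_apply, one_apply_eq] at h2
  apply Complex.ofReal_injective
  rw [Complex.ofReal_sum, Complex.ofReal_one, ← h2]
  exact Finset.sum_congr rfl fun b _ => by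
    rw [wt, conjTranspose_apply, Complex.star_def, Complex.mul_conj]

lemma wt_sum' {ρ : Matrix n n ℂ} {U : Matrix n i ℂ} {p : i → ℝ} 
    (hρ : Spec ρ U p) (V : Matrix n j ℂ) (b : j) :
    ((∑ a, wt U V a b * p a : ℝ) : ℂ) = (Vᴴ * ρ * V) b b := by
  have : Vᴴ * ρ * V = (Uᴴ * V)ᴴ * (diagonal (fun k => (p k : ℂ)) * (Uᴴ * V)) := by
    rw [hρ.eq, conjTranspose_mul, conjTranspose_conjTranspose]
    simp only [Matrix.mul_assoc]
  rw [this, Matrix.mul_apply, Complex.ofReal_sum]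
  refine Finset.sum_congr rfl fun a _ => ?_
  rw [diagonal_mul, conjTranspose_apply, Complex.star_def, Complex.ofReal_mul, wt,
    Complex.normSq_eq_conj_mul_self]
  ring

end core

section mono
variable {i j i' j' : Type} [Fintype i] [Fintype j] [Fintype i'] [Fintype j']
open Filter Topology

lemma lim0 (w : i → j → ℝ) (p : i → ℝ) (q : j → ℝ) (hp : ∀ a, 0 ≤ p a)
    (hs : ∀ a b, q b = 0 → w a b * p a = 0) :
    Tendsto (fun t => ∑ a, ∑ b, w a b * (p a * Real.log (q b + t * p a))) (𝓝[>] 0)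
      (𝓝 (∑ a, ∑ b, w a b * (p a * Real.log (q b)))) := by
  refine tendsto_finsetSum _ fun a _ => tendsto_finsetSum _ fun b _ => ?_
  simp only [← mul_assoc]
  by_cases h : q b = 0
  · simp [hs a b h]
  · refine Tendsto.const_mul _ (tendsto_nhdsWithin_of_tendsto_nhds ?_)
    have : Tendsto (fun t => q b + t * p a) (𝓝 0) (𝓝 (q b)) := by
      have : Continuous (fun t => q b + t * p a) := by fun_prop
      simpa using this.tendsto 0
    exact this.log h

lemma limtop (w : i → j → ℝ) (p : i → ℝ) (q : j → ℝ) (hp : ∀ a, 0 ≤ p a) (hq : ∀ b, 0 ≤ q b) :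
    Tendsto (fun t => ∑ a, ∑ b, w a b * (p a * Real.log (q b + t * p a))
      - (∑ a, ∑ b, w a b * p a) * Real.log t) atTop
      (𝓝 (∑ a, ∑ b, w a b * (p a * Real.log (p a)))) := by
  simp only [Finset.sum_mul, ← Finset.sum_sub_distrib]
  refine tendsto_finsetSum _ fun a _ => tendsto_finsetSum _ fun b _ => ?_
  rcases (hp a).eq_or_lt with h | h
  · simp [← h]
  · have h1 : Tendsto (fun t : ℝ => q b / t + p a) atTop (𝓝 (p a)) := by
      simpa using (tendsto_const_nhds.div_atTop tendsto_id).add_const (p a)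
    have h2 := ((h1.log h.ne').const_mul (w a b * p a))
    rw [← mul_assoc]
    refine h2.congr' ?_
    filter_upwards [eventually_gt_atTop 0] with t ht
    have hqb := hq b
    have : q b / t + p a = (q b + t * p a) / t := by field_simp
    rw [this, Real.log_div (by positivity) ht.ne']
    ring

lemma hder (w : i → j → ℝ) (p : i → ℝ) (q : j → ℝ) (hp : ∀ a, 0 ≤ p a) (hq : ∀ b, 0 ≤ q b)
    (t : ℝ) (ht : 0 < t) :
    HasDerivAt (fun t => ∑ a, ∑ b, w a b * (p a * Real.log (q b + t * p a)))
      (∑ a, ∑ b, w a b * (p a ^ 2 / (q b + t * p a))) t := by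
  refine HasDerivAt.fun_sum fun a _ => HasDerivAt.fun_sum fun b _ => HasDerivAt.const_mul _ ?_
  rcases (hp a).eq_or_lt with h | h
  · simpa [← h] using hasDerivAt_const t (0 : ℝ)
  · have hqb := hq b
    have h1 : HasDerivAt (fun t => q b + t * p a) (p a) t := by
      simpa using ((hasDerivAt_id t).mul_const (p a)).const_add (q b)
    have := (h1.log (by positivity)).const_mul (p a)
    convert this using 1
    ring

lemma scalar_mono (w : i → j → ℝ) (p : i → ℝ) (q : j → ℝ) (hp : ∀ a, 0 ≤ p a) (hq : ∀ b, 0 ≤ q b)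
    (hs : ∀ a b, q b = 0 → w a b * p a = 0)
    (w' : i' → j' → ℝ) (p' : i' → ℝ) (q' : j' → ℝ) (hp' : ∀ a, 0 ≤ p' a) (hq' : ∀ b, 0 ≤ q' b)
    (hs' : ∀ a b, q' b = 0 → w' a b * p' a = 0)
    (htr : ∑ a, ∑ b, w a b * p a = ∑ a, ∑ b, w' a b * p' a)
    (hF : ∀ t : ℝ, 0 < t → ∑ a, ∑ b, w' a b * (p' a ^ 2 / (q' b + t * p' a))
      ≤ ∑ a, ∑ b, w a b * (p a ^ 2 / (q b + t * p a))) :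
    ∑ a, ∑ b, w a b * (p a * Real.log (q b)) - ∑ a, ∑ b, w' a b * (p' a * Real.log (q' b)) ≤
    ∑ a, ∑ b, w a b * (p a * Real.log (p a)) - ∑ a, ∑ b, w' a b * (p' a * Real.log (p' a)) := by
  let g : ℝ → ℝ := fun t => ∑ a, ∑ b, w a b * (p a * Real.log (q b + t * p a)) -
    ∑ a, ∑ b, w' a b * (p' a * Real.log (q' b + t * p' a))
  have hd : ∀ t, 0 < t → HasDerivAt g (∑ a, ∑ b, w a b * (p a ^ 2 / (q b + t * p a)) - 
      ∑ a, ∑ b, w' a b * (p' a ^ 2 / (q' b + t * p' a))) t := fun t ht =>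
    (hder w p q hp hq t ht).sub (hder w' p' q' hp' hq' t ht)
  have hm : MonotoneOn g (Set.Ioi 0) := by
    apply monotoneOn_of_deriv_nonneg (convex_Ioi 0)
    · exact fun t ht => (hd t ht).continuousAt.continuousWithinAt
    · rw [interior_Ioi]
      exact fun t ht => (hd t ht).differentiableAt.differentiableWithinAt
    · rw [interior_Ioi]
      intro t ht
      rw [(hd t ht).deriv]
      exact sub_nonneg.2 (hF t ht)
  have l0 := (lim0 w p q hp hs).sub (lim0 w' p' q' hp' hs')
  have l1 : Tendsto g atTop (𝓝 (∑ a, ∑ b, w a b * (p a * Real.log (p a)) -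
      ∑ a, ∑ b, w' a b * (p' a * Real.log (p' a)))) := by
    refine ((limtop w p q hp hq).sub (limtop w' p' q' hp' hq')).congr fun t => ?_
    rw [htr]; simp only [g]; ring
  have h1 : ∀ t, 0 < t → ∑ a, ∑ b, w a b * (p a * Real.log (q b)) -
      ∑ a, ∑ b, w' a b * (p' a * Real.log (q' b)) ≤ g t := by
    intro t ht
    refine le_of_tendsto l0 ?_
    filter_upwards [Ioo_mem_nhdsGT ht] with s hs
    exact hm hs.1 ht hs.2.le
  refine ge_of_tendsto l1 ?_
  filter_upwards [eventually_gt_atTop 0] with t ht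
  exact h1 t ht
end mono

section ssa
open scoped Kronecker
variable {A B C M i j i' j' : Type} [Fintype A] [DecidableEq A] [Fintype B] [DecidableEq B]
  [Fintype C] [DecidableEq C] [Fintype M] [DecidableEq M]
  [Fintype i] [DecidableEq i] [Fintype j] [DecidableEq j]
  [Fintype i'] [DecidableEq i'] [Fintype j'] [DecidableEq j']

def tr2 (ρ : Matrix (M × C) (M × C) ℂ) : Matrix M M ℂ := fun x y => ∑ c, ρ (x, c) (y, c)

def tr1 (ρ : Matrix ((A × B) × C) ((A × B) × C) ℂ) : Matrix (B × C) (B × C) ℂ :=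
  fun x y => ∑ a, ρ ((a, x.1), x.2) ((a, y.1), y.2)

def lift1 (X : Matrix (B × C) (B × C) ℂ) : Matrix ((A × B) × C) ((A × B) × C) ℂ :=
  fun x y => if x.1.1 = y.1.1 then X (x.1.2, x.2) (y.1.2, y.2) else 0

lemma lift1_mul (X Y : Matrix (B × C) (B × C) ℂ) :
    lift1 (A := A) (X * Y) = lift1 X * lift1 Y := by
  ext ⟨⟨a, b⟩, c⟩ ⟨⟨a', b'⟩, c'⟩
  simp only [lift1, Matrix.mul_apply, Fintype.sum_prod_type]
  rw [Finset.sum_eq_single a]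
  · by_cases h : a = a' <;> simp [h]
  · intro a'' _ h
    simp [Ne.symm h]
  · simp

lemma lift1_conj (X : Matrix (B × C) (B × C) ℂ) :
    lift1 (A := A) (Xᴴ) = (lift1 X)ᴴ := by
  ext ⟨⟨a, b⟩, c⟩ ⟨⟨a', b'⟩, c'⟩
  simp only [lift1, conjTranspose_apply]
  by_cases h : a = a'
  · simp [h]
  · simp [h, Ne.symm h]

lemma trace_lift1 (ρ : Matrix ((A × B) × C) ((A × B) × C) ℂ) (X : Matrix (B × C) (B × C) ℂ) :
    trace (ρ * lift1 X) = trace (tr1 ρ * X) := by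
  simp only [trace, diag_apply, Matrix.mul_apply, Fintype.sum_prod_type, tr1, lift1,
    Finset.sum_mul, mul_ite, mul_zero]
  rw [Finset.sum_comm]
  refine Finset.sum_congr rfl fun b _ => ?_
  rw [Finset.sum_comm]
  refine Finset.sum_congr rfl fun c _ => ?_
  simp only [Finset.sum_ite_irrel, Finset.sum_const_zero, Finset.sum_ite_eq', Finset.mem_univ,
    if_true]
  rw [Finset.sum_comm]
  refine Finset.sum_congr rfl fun b' _ => ?_
  rw [Finset.sum_comm]

lemma vf_lift1 (ρ σ : Matrix ((A × B) × C) ((A × B) × C) ℂ) (t : ℝ)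
    (X : Matrix (B × C) (B × C) ℂ) : vf (tr1 ρ) (tr1 σ) t X = vf ρ σ t (lift1 X) := by
  simp only [vf, ← lift1_conj, ← lift1_mul, trace_lift1]

lemma spec_kron {τ : Matrix M M ℂ} {V : Matrix M j ℂ} {q : j → ℝ} (h : Spec τ V q) :
    Spec (τ ⊗ₖ (1 : Matrix C C ℂ)) (V ⊗ₖ (1 : Matrix C C ℂ)) (fun x => q x.1) where
  l := by
    rw [conjTranspose_kronecker, ← mul_kronecker_mul, h.l]; simp
  r := by
    rw [conjTranspose_kronecker, ← mul_kronecker_mul, h.r]; simp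
  eq := by
    have : diagonal (fun k : j × C => ((q k.1 : ℝ) : ℂ)) =
        diagonal (fun k => (q k : ℂ)) ⊗ₖ (1 : Matrix C C ℂ) := by
      rw [← diagonal_one, diagonal_kronecker_diagonal]; simp
    rw [this, conjTranspose_kronecker, ← mul_kronecker_mul, ← mul_kronecker_mul, ← h.eq]; simp
  nn := fun k => h.nn k.1

lemma tr2_conj (ρ : Matrix (M × C) (M × C) ℂ) (V : Matrix M j ℂ) (b : j) :
    ∑ c : C, ((V ⊗ₖ (1 : Matrix C C ℂ))ᴴ * ρ * (V ⊗ₖ (1 : Matrix C C ℂ))) (b, c) (b, c)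
      = (Vᴴ * tr2 ρ * V) b b := by
  simp only [conjTranspose_kronecker, conjTranspose_one, Matrix.mul_apply, Fintype.sum_prod_type,
    kroneckerMap_apply, one_apply, tr2, mul_ite, mul_one, mul_zero, ite_mul, zero_mul,
    Finset.sum_ite_eq, Finset.sum_ite_eq', Finset.mem_univ, if_true, Finset.mul_sum, Finset.sum_mul]
  rw [Finset.sum_comm]
  refine Finset.sum_congr rfl fun m _ => ?_
  rw [Finset.sum_comm]

lemma half_sum {ρ : Matrix (M × C) (M × C) ℂ} {U : Matrix (M × C) i ℂ} {p : i → ℝ}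
    {V : Matrix M j ℂ} {q : j → ℝ} (hρ : Spec ρ U p) (hτ : Spec (tr2 ρ) V q) (b : j) :
    ∑ c : C, ∑ a, wt U (V ⊗ₖ (1 : Matrix C C ℂ)) a (b, c) * p a = q b := by
  apply Complex.ofReal_injective
  rw [Complex.ofReal_sum]
  simp only [wt_sum' hρ]
  rw [tr2_conj]
  have : Vᴴ * tr2 ρ * V = diagonal (fun k => (q k : ℂ)) := by
    rw [hτ.eq]
    calc _ = (Vᴴ * V) * diagonal (fun k => (q k : ℂ)) * (Vᴴ * V) := by simp only [Matrix.mul_assoc]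
      _ = _ := by rw [hτ.l]; simp
  rw [this, diagonal_apply_eq]

lemma half_supp {ρ : Matrix (M × C) (M × C) ℂ} {U : Matrix (M × C) i ℂ} {p : i → ℝ}
    {V : Matrix M j ℂ} {q : j → ℝ} (hρ : Spec ρ U p) (hτ : Spec (tr2 ρ) V q) (a : i) (b : j × C)
    (h : q b.1 = 0) : wt U (V ⊗ₖ (1 : Matrix C C ℂ)) a b * p a = 0 := by
  have h0 := half_sum hρ hτ b.1
  have nn : ∀ a b, 0 ≤ wt U (V ⊗ₖ (1 : Matrix C C ℂ)) a b * p a := fun a b =>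
    mul_nonneg (Complex.normSq_nonneg _) (hρ.nn a)
  rw [h, Finset.sum_eq_zero_iff_of_nonneg (fun c _ => Finset.sum_nonneg fun a _ => nn a _)] at h0
  have h1 := h0 b.2 (Finset.mem_univ _)
  rw [Finset.sum_eq_zero_iff_of_nonneg (fun a _ => nn a _)] at h1
  exact h1 a (Finset.mem_univ _)

lemma half_q {ρ : Matrix (M × C) (M × C) ℂ} {U : Matrix (M × C) i ℂ} {p : i → ℝ}
    {V : Matrix M j ℂ} {q : j → ℝ} (hρ : Spec ρ U p) (hτ : Spec (tr2 ρ) V q) :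
    ∑ a, ∑ b : j × C, wt U (V ⊗ₖ (1 : Matrix C C ℂ)) a b * (p a * Real.log (q b.1))
      = ∑ b, q b * Real.log (q b) := by
  rw [Finset.sum_comm, Fintype.sum_prod_type]
  refine Finset.sum_congr rfl fun b _ => ?_
  conv_rhs => rw [← half_sum hρ hτ b]
  simp only [← mul_assoc, ← Finset.sum_mul]
  rw [half_sum hρ hτ b]

lemma wt_sum_f {n : Type} [Fintype n] [DecidableEq n] {σ ρ : Matrix n n ℂ} {U : Matrix n i ℂ}
    {V : Matrix n j ℂ} {p : i → ℝ} {q : j → ℝ}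
    (hρ : Spec ρ U p) (hσ : Spec σ V q) (f : i → ℝ) :
    ∑ a, ∑ b, wt U V a b * f a = ∑ a, f a := by
  simp only [← Finset.sum_mul, wt_sum hρ hσ, one_mul]

lemma spec_trace {n : Type} [Fintype n] [DecidableEq n] {ρ : Matrix n n ℂ} {U : Matrix n i ℂ}
    {p : i → ℝ} (hρ : Spec ρ U p) : ((∑ a, p a : ℝ) : ℂ) = trace ρ := by
  rw [hρ.eq, trace_mul_comm, ← Matrix.mul_assoc, hρ.l, Matrix.one_mul, trace_diagonal]
  simp

lemma ssa_core {ρ : Matrix ((A × B) × C) ((A × B) × C) ℂ}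
    {U : Matrix ((A × B) × C) i ℂ} {p : i → ℝ} {V : Matrix (A × B) j ℂ} {q : j → ℝ}
    {U' : Matrix (B × C) i' ℂ} {p' : i' → ℝ} {V' : Matrix B j' ℂ} {q' : j' → ℝ}
    (hρ : Spec ρ U p) (hτ : Spec (tr2 ρ) V q)
    (hρ' : Spec (tr1 ρ) U' p') (hτ' : Spec (tr2 (tr1 ρ)) V' q') :
    ∑ b, q b * Real.log (q b) - ∑ b, q' b * Real.log (q' b) ≤
      ∑ a, p a * Real.log (p a) - ∑ a, p' a * Real.log (p' a) := by
  have hσ := spec_kron (C := C) hτ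
  have hσ' := spec_kron (C := C) hτ'
  have e : tr1 (tr2 ρ ⊗ₖ (1 : Matrix C C ℂ)) = tr2 (tr1 ρ) ⊗ₖ (1 : Matrix C C ℂ) := by
    ext ⟨b, c⟩ ⟨b', c'⟩
    simp only [tr1, tr2, kroneckerMap_apply]
    change ∑ a, (∑ x, ρ ((a, b), x) ((a, b'), x)) * (1 : Matrix C C ℂ) c c' =
      (∑ x, ∑ a, ρ ((a, b), x) ((a, b'), x)) * (1 : Matrix C C ℂ) c c'
    rw [← Finset.sum_mul, Finset.sum_comm]
  have key := scalar_mono _ p _ hρ.nn hσ.nn (half_supp hρ hτ) _ p' _ hρ'.nn hσ'.nn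
    (half_supp hρ' hτ') ?_ ?_
  · rwa [half_q hρ hτ, half_q hρ' hτ', wt_sum_f hρ hσ (fun a => p a * Real.log (p a)),
      wt_sum_f hρ' hσ' (fun a => p' a * Real.log (p' a))] at key
  · rw [wt_sum_f hρ hσ, wt_sum_f hρ' hσ']
    apply Complex.ofReal_injective
    rw [spec_trace hρ, spec_trace hρ']
    simp only [trace, diag_apply, tr1, Fintype.sum_prod_type]
    rw [Finset.sum_comm]
    refine Finset.sum_congr rfl fun b _ => ?_
    rw [Finset.sum_comm]
  · intro t ht
    obtain ⟨X, hX⟩ := exists_vf hρ' hσ' ht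
    have := vf_le hρ hσ ht (lift1 X)
    rw [← vf_lift1, e, ← hX] at this
    exact this

lemma Spec.reindex {n m : Type} [Fintype n] [DecidableEq n] [Fintype m] [DecidableEq m]
    {ρ : Matrix n n ℂ} {U : Matrix n i ℂ} {p : i → ℝ} (h : Spec ρ U p) (e : m ≃ n) :
    Spec (ρ.submatrix e e) (U.submatrix e id) p where
  l := by
    rw [conjTranspose_submatrix, submatrix_mul_equiv, h.l]; simp
  r := by
    rw [conjTranspose_submatrix, ← submatrix_mul _ _ _ _ _ Function.bijective_id, h.r]; simp
  eq := by
    rw [conjTranspose_submatrix]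
    conv_lhs => rw [h.eq]
    rw [submatrix_mul _ _ e id e Function.bijective_id,
      submatrix_mul _ _ e id id Function.bijective_id]
    simp
  nn := h.nn

lemma exists_spec {n : Type} [Fintype n] [DecidableEq n] {ρ : Matrix n n ℂ} (h : ρ.PosSemidef) :
    ∃ (U : Matrix n n ℂ) (p : n → ℝ), Spec ρ U p ∧
      vnEntropy ρ = - (∑ a, p a * Real.log (p a)) / Real.log 2 := by
  refine ⟨h.1.eigenvectorUnitary, h.1.eigenvalues, ⟨?_, ?_, ?_, h.eigenvalues_nonneg⟩, ?_⟩
  · exact Unitary.coe_star_mul_self _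
  · exact Unitary.coe_mul_star_self _
  · conv_lhs => rw [h.1.spectral_theorem, Unitary.conjStarAlgAut_apply]
    rfl
  · rw [vnEntropy, dif_pos h.1]
    simp only [negxlog2, Real.logb, neg_div, Finset.sum_div, Finset.sum_neg_distrib, mul_div_assoc]

end ssa

section parties
variable {ι : Type} [Fintype ι] [DecidableEq ι] {d : ι → Type}
  [∀ i, Fintype (d i)] [∀ i, DecidableEq (d i)]

lemma pTr_psd {ρ : Matrix (∀ i, d i) (∀ i, d i) ℂ} (h : ρ.PosSemidef) (s : Finset ι) :
    (pTr ρ s).PosSemidef := by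
  have : pTr ρ s = ∑ z : (i : {j // j ∉ s}) → d i.1,
      ρ.submatrix (fun x => combine s x z) (fun x => combine s x z) := by
    ext x y
    simp [pTr, Matrix.sum_apply]
  rw [this]
  exact posSemidef_sum _ fun z _ => h.submatrix _

def jn (s t : Finset ι) (hd : Disjoint s t) :
    (((i : {j // j ∈ s}) → d i.1) × ((i : {j // j ∈ t}) → d i.1)) ≃
      ((i : {j // j ∈ s ∪ t}) → d i.1) where
  toFun x i := if h : i.1 ∈ s then x.1 ⟨i, h⟩ else
    x.2 ⟨i, (Finset.mem_union.1 i.2).resolve_left h⟩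
  invFun f := (fun i => f ⟨i, Finset.mem_union_left _ i.2⟩,
    fun i => f ⟨i, Finset.mem_union_right _ i.2⟩)
  left_inv := by
    rintro ⟨x, y⟩
    ext i
    · simp
    · have := Finset.disjoint_right.1 hd i.2
      simp [this]
  right_inv := by
    intro f
    ext i
    simp

def jc (s t : Finset ι) (hd : Disjoint s t) :
    (((i : {j // j ∈ t}) → d i.1) × ((i : {j // j ∉ s ∪ t}) → d i.1)) ≃
      ((i : {j // j ∉ s}) → d i.1) where
  toFun x i := if h : i.1 ∈ t then x.1 ⟨i, h⟩ else
    x.2 ⟨i, fun h' => (Finset.mem_union.1 h').elim i.2 h⟩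
  invFun f := (fun i => f ⟨i, Finset.disjoint_right.1 hd i.2⟩,
    fun i => f ⟨i, fun h => i.2 (Finset.mem_union_left _ h)⟩)
  left_inv := by
    rintro ⟨x, y⟩
    ext i
    · simp
    · have : i.1 ∉ t := fun h => i.2 (Finset.mem_union_right _ h)
      simp [this]
  right_inv := by
    intro f
    ext i
    by_cases h : i.1 ∈ t <;> simp [h]

lemma comb_eq (s t : Finset ι) (hd : Disjoint s t) (x : (i : {j // j ∈ s}) → d i.1)
    (z : (i : {j // j ∈ t}) → d i.1) (w : (i : {j // j ∉ s ∪ t}) → d i.1) :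
    combine (s ∪ t) (jn s t hd (x, z)) w = combine s x (jc s t hd (z, w)) := by
  ext i
  by_cases h1 : i ∈ s <;> by_cases h2 : i ∈ t <;> simp [combine, jn, jc, h1, h2]

lemma pTr_union (ρ : Matrix (∀ i, d i) (∀ i, d i) ℂ) (s t : Finset ι) (hd : Disjoint s t)
    (x y : (i : {j // j ∈ s}) → d i.1) :
    pTr ρ s x y = ∑ z, pTr ρ (s ∪ t) (jn s t hd (x, z)) (jn s t hd (y, z)) := by
  simp only [pTr, comb_eq]
  rw [← Fintype.sum_prod_type'
    (f := fun z w => ρ (combine s x (jc s t hd (z, w))) (combine s y (jc s t hd (z, w))))]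
  exact (Equiv.sum_comp (jc s t hd) (fun v => ρ (combine s x v) (combine s y v))).symm

lemma pTr_union' (ρ : Matrix (∀ i, d i) (∀ i, d i) ℂ) (s t u : Finset ι) (hd : Disjoint s t)
    (hu : u = s ∪ t)
    (x y : (i : {j // j ∈ s}) → d i.1)
    (f g : ((i : {j // j ∈ t}) → d i.1) → (i : {j // j ∈ u}) → d i.1)
    (hf : ∀ z i, f z i = jn s t hd (x, z) ⟨i.1, hu ▸ i.2⟩)
    (hg : ∀ z i, g z i = jn s t hd (y, z) ⟨i.1, hu ▸ i.2⟩) :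
    pTr ρ s x y = ∑ z, pTr ρ u (f z) (g z) := by
  subst hu
  rw [pTr_union ρ s t hd]
  refine Finset.sum_congr rfl fun z _ => ?_
  have h1 : f z = jn s t hd (x, z) := funext (hf z)
  have h2 : g z = jn s t hd (y, z) := funext (hg z)
  rw [h1, h2]

lemma ssa_disj {ρ : Matrix (∀ i, d i) (∀ i, d i) ℂ} (hρ : ρ.PosSemidef) (a b c : Finset ι)
    (hab : Disjoint a b) (hbc : Disjoint b c) (hac : Disjoint a c) :
    Sv ρ (a ∪ b ∪ c) + Sv ρ b ≤ Sv ρ (a ∪ b) + Sv ρ (b ∪ c) := by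
  have habc : Disjoint (a ∪ b) c := Finset.disjoint_union_left.2 ⟨hac, hbc⟩
  have hbca : Disjoint (b ∪ c) a := Finset.disjoint_union_left.2 ⟨hab.symm, hac.symm⟩
  obtain ⟨U, p, h1, e1⟩ := exists_spec (pTr_psd hρ (a ∪ b ∪ c))
  obtain ⟨V, q, h2, e2⟩ := exists_spec (pTr_psd hρ (a ∪ b))
  obtain ⟨U', p', h3, e3⟩ := exists_spec (pTr_psd hρ (b ∪ c))
  obtain ⟨V', q', h4, e4⟩ := exists_spec (pTr_psd hρ b)
  have k1 := h1.reindex (((jn a b hab).prodCongr (Equiv.refl _)).trans (jn (a ∪ b) c habc))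
  have k2 := h2.reindex (jn a b hab)
  have k3 := h3.reindex (jn b c hbc)
  set R := (pTr ρ (a ∪ b ∪ c)).submatrix
    (((jn a b hab).prodCongr (Equiv.refl _)).trans (jn (a ∪ b) c habc))
    (((jn a b hab).prodCongr (Equiv.refl _)).trans (jn (a ∪ b) c habc)) with hR
  have r2 : (pTr ρ (a ∪ b)).submatrix (jn a b hab) (jn a b hab) = tr2 R := by
    ext x y
    rw [submatrix_apply, pTr_union ρ (a ∪ b) c habc]
    rfl
  have r3 : (pTr ρ (b ∪ c)).submatrix (jn b c hbc) (jn b c hbc) = tr1 R := by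
    have aux : ∀ (z : (i : {j // j ∈ a}) → d i.1)
        (x : ((i : {j // j ∈ b}) → d i.1) × ((i : {j // j ∈ c}) → d i.1)) 
        (i : {j // j ∈ a ∪ b ∪ c}) (hi : i.1 ∈ b ∪ c ∪ a),
        jn (a ∪ b) c habc (jn a b hab (z, x.1), x.2) i =
          jn (b ∪ c) a hbca (jn b c hbc x, z) ⟨i.1, hi⟩ := by
      rintro z x ⟨i, h⟩ hi
      have d1 : i ∈ a → i ∉ b := fun h => Finset.disjoint_left.1 hab h
      have d2 : i ∈ a → i ∉ c := fun h => Finset.disjoint_left.1 hac h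
      have d3 : i ∈ b → i ∉ c := fun h => Finset.disjoint_left.1 hbc h
      by_cases ha : i ∈ a
      · simp [jn, ha, d1 ha, d2 ha]
      · by_cases hb : i ∈ b
        · simp [jn, ha, hb]
        · have hc : i ∈ c := by simpa [ha, hb] using hi
          simp [jn, ha, hb, hc]
    ext x y
    have hu : a ∪ b ∪ c = b ∪ c ∪ a := by ext i; simp only [Finset.mem_union]; tauto
    exact pTr_union' ρ (b ∪ c) a (a ∪ b ∪ c) hbca hu (jn b c hbc x) (jn b c hbc y)
      (fun z => jn (a ∪ b) c habc (jn a b hab (z, x.1), x.2))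
      (fun z => jn (a ∪ b) c habc (jn a b hab (z, y.1), y.2))
      (fun z i => aux z x i (hu ▸ i.2)) (fun z i => aux z y i (hu ▸ i.2))
  have r4 : pTr ρ b = tr2 (tr1 R) := by
    rw [← r3]
    ext x y
    rw [pTr_union ρ b c hbc]
    rfl
  rw [r2] at k2
  rw [r3] at k3
  rw [r4] at h4
  have key := ssa_core k1 k2 k3 h4
  have hl : 0 < Real.log 2 := Real.log_pos (by norm_num)
  simp only [Sv]
  rw [e1, e2, e3, e4, ← add_div, ← add_div]
  apply div_le_div_of_nonneg_right _ hl.le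
  linarith

lemma ssa_gen {ρ : Matrix (∀ i, d i) (∀ i, d i) ℂ} (hρ : ρ.PosSemidef) (s t u v : Finset ι)
    (hu : u = s ∪ t) (hv : v = s ∩ t) : Sv ρ u + Sv ρ v ≤ Sv ρ s + Sv ρ t := by
  have := ssa_disj hρ (s \ t) (s ∩ t) (t \ s)
    (by rw [Finset.disjoint_left]; intro x; simp; tauto)
    (by rw [Finset.disjoint_left]; intro x; simp; tauto)
    (by rw [Finset.disjoint_left]; intro x; simp; tauto)
  have e1 : s \ t ∪ s ∩ t = s := by ext x; simp; tauto
  have e2 : s ∩ t ∪ t \ s = t := by ext x; simp; tauto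
  have e3 : s ∪ t \ s = u := by rw [hu]; ext x; simp
  rwa [e1, e2, e3, ← hv] at this

end parties


/-- For every density operator `ρ` on a six-partite Hilbert space
`H^A⊗H^B⊗H^C⊗H^D⊗H^E⊗H^F` (parties `0,…,5`), one has `I'(AB:CD:EF) ≥ I'(AB:C:E)`, i.e.
`S(ABCD)+S(ABEF)+S(CDEF)-2S(ABCDEF) ≥ S(ABC)+S(ABE)+S(CE)-2S(ABCE)`. -/
theorem dualMutualInfo_six_party
    {d : Fin 6 → Type} [∀ i, Fintype (d i)] [∀ i, DecidableEq (d i)]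
    (ρ : Matrix (∀ i, d i) (∀ i, d i) ℂ) (hρ : IsDensity ρ) :
    MI' ρ {({0, 1} : Finset (Fin 6)), {2, 3}, {4, 5}}
      ≥ MI' ρ {({0, 1} : Finset (Fin 6)), {2}, {4}}
    ∧ Sv ρ {0, 1, 2, 3} + Sv ρ {0, 1, 4, 5} + Sv ρ {2, 3, 4, 5}
        - 2 * Sv ρ {0, 1, 2, 3, 4, 5}
      ≥ Sv ρ {0, 1, 2} + Sv ρ {0, 1, 4} + Sv ρ {2, 4} - 2 * Sv ρ {0, 1, 2, 4} := by
  have h2 : Sv ρ {0, 1, 2, 3} + Sv ρ {0, 1, 4, 5} + Sv ρ {2, 3, 4, 5}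
        - 2 * Sv ρ {0, 1, 2, 3, 4, 5}
      ≥ Sv ρ {0, 1, 2} + Sv ρ {0, 1, 4} + Sv ρ {2, 4} - 2 * Sv ρ {0, 1, 2, 4} := by
    have a1 := ssa_gen hρ.1 {0, 1, 2, 3} {0, 1, 2, 4, 5} {0, 1, 2, 3, 4, 5} {0, 1, 2}
      (by decide) (by decide)
    have a2 := ssa_gen hρ.1 {2, 3, 4, 5} {0, 1, 2, 4, 5} {0, 1, 2, 3, 4, 5} {2, 4, 5}
      (by decide) (by decide)
    have a3 := ssa_gen hρ.1 {0, 1, 4, 5} {0, 1, 2, 4} {0, 1, 2, 4, 5} {0, 1, 4}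
      (by decide) (by decide)
    have a4 := ssa_gen hρ.1 {2, 4, 5} {0, 1, 2, 4} {0, 1, 2, 4, 5} {2, 4}
      (by decide) (by decide)
    linarith
  have m : ∀ X Y Z T XY XZ YZ : Finset (Fin 6), X ≠ Y → X ≠ Z → Y ≠ Z →
      ({X, Y, Z} : Finset (Finset (Fin 6))).sup id = T → T \ Z = XY → T \ Y = XZ → T \ X = YZ →
      MI' ρ {X, Y, Z} = Sv ρ XY + Sv ρ XZ + Sv ρ YZ - 2 * Sv ρ T := by
    intro X Y Z T XY XZ YZ h1 h2 h3 hT e1 e2 e3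
    have hX : X ∉ ({Y, Z} : Finset (Finset (Fin 6))) := by simp [h1, h2]
    have hY : Y ∉ ({Z} : Finset (Finset (Fin 6))) := by simp [h3]
    rw [MI', hT, Finset.sum_insert hX, Finset.sum_insert hY, Finset.sum_singleton,
      Finset.card_insert_of_notMem hX, Finset.card_insert_of_notMem hY, Finset.card_singleton,
      e1, e2, e3]
    push_cast
    ring
  refine ⟨?_, h2⟩
  rw [m {0, 1} {2, 3} {4, 5} {0, 1, 2, 3, 4, 5} {0, 1, 2, 3} {0, 1, 4, 5} {2, 3, 4, 5}
    (by decide) (by decide) (by decide) (by decide) (by decide) (by decide) (by decide),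
    m {0, 1} {2} {4} {0, 1, 2, 4} {0, 1, 2} {0, 1, 4} {2, 4}
    (by decide) (by decide) (by decide) (by decide) (by decide) (by decide) (by decide)]
  exact h2
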